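/- Let h and ū be smooth and satisfy the 2D Serre–Green–Naghdi system (mass equation h_t + ∇·(h ū) = 0 and momentum equations ∂_t(h ū_i) + Σ_{j=1,2} ∂_j(h ū_i ū_j + p δ_{ij}) = 0 for i = 1,2) with h > 0 everywhere. Then the local energy conservation law holds: ∂_t(h E) + ∇·(h E ū + p ū) = 0, where E = |ū|²/2 + g h/2 + ḣ²/6. -/

import Mathlib

noncomputable section

/-- Partial derivative in the time variable of a function of `(t, x, y)`. -/
def pT (f : ℝ → ℝ → ℝ → ℝ) : ℝ → ℝ → ℝ → ℝ := fun t x y => deriv (fun s => f s x y) t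

/-- Partial derivative in the first space variable of a function of `(t, x, y)`. -/
def pX (f : ℝ → ℝ → ℝ → ℝ) : ℝ → ℝ → ℝ → ℝ := fun t x y => deriv (fun s => f t s y) x

/-- Partial derivative in the second space variable of a function of `(t, x, y)`. -/
def pY (f : ℝ → ℝ → ℝ → ℝ) : ℝ → ℝ → ℝ → ℝ := fun t x y => deriv (fun s => f t x s) y

/-- Smoothness of a function of `(t, x, y)`. -/
def Smooth3 (f : ℝ → ℝ → ℝ → ℝ) : Prop :=
  ContDiff ℝ (⊤ : ℕ∞) (fun q : ℝ × ℝ × ℝ => f q.1 q.2.1 q.2.2)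

/-! The law is an identity in differential algebra. Let `D = ∂ₜ + ∑ᵢ uᵢ ∂ᵢ` be the material
derivative. The mass equation gives `D h = -h ∇·u` and turns every flux-form expression
`∂ₜ(h f) + ∇·(h f u)` into `h D f`, so the momentum equation reads `h D uᵢ = -∂ᵢ p`. Multiplying by
`uᵢ` shows that `h D (|u|² / 2) = -u·∇p`, while `e = g h / 2 + ḣ² / 6` satisfies
`h D e = h ḣ (g / 2 + ḧ / 3) = -p ∇·u`. The two rates add up to `-∇·(p u)`. -/

section DifferentialAlgebra

variable {R A ι : Type*} [CommRing A] [Fintype ι]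

section CommRing

variable [CommRing R] [Algebra R A] {dt : Derivation R A A} {d : ι → Derivation R A A}
  {h p : A} {u : ι → A}

/-- The material derivative `∂ₜ + ∑ᵢ uᵢ ∂ᵢ` along the velocity `u`, as a derivation of the algebra
of functions of time and space; `dt` and `d i` stand for the partial derivatives. -/
def materialDeriv (dt : Derivation R A A) (d : ι → Derivation R A A) (u : ι → A) :
    Derivation R A A :=
  dt + ∑ i, u i • d i

theorem materialDeriv_apply (f : A) : materialDeriv dt d u f = dt f + ∑ i, u i * d i f := by
  rw [materialDeriv, Derivation.add_apply, ← Derivation.coeFnAddMonoidHom_apply (∑ i, _), map_sum,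
    Finset.sum_apply]
  rfl

theorem sum_derivation_mul (f : A) (v : ι → A) :
    ∑ i, d i (f * v i) = f * ∑ i, d i (v i) + ∑ i, v i * d i f := by
  simp only [Derivation.leibniz, smul_eq_mul, Finset.sum_add_distrib, Finset.mul_sum]

theorem flux_form_eq_mul_materialDeriv (mass : dt h + ∑ i, d i (h * u i) = 0) (f : A) :
    dt (h * f) + ∑ i, d i (h * f * u i) = h * materialDeriv dt d u f := by
  have flux : ∑ i, d i (h * f * u i) = f * ∑ i, d i (h * u i) + h * ∑ i, u i * d i f := by
    simp only [mul_comm h f, mul_assoc f, sum_derivation_mul f, Finset.mul_sum, mul_assoc h]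
  rw [flux, materialDeriv_apply, Derivation.leibniz, smul_eq_mul, smul_eq_mul]
  linear_combination f * mass

theorem materialDeriv_depth (mass : dt h + ∑ i, d i (h * u i) = 0) :
    materialDeriv dt d u h = -(h * ∑ i, d i (u i)) := by
  rw [materialDeriv_apply]
  linear_combination mass - sum_derivation_mul (d := d) h u

theorem mul_materialDeriv_velocity [DecidableEq ι] (mass : dt h + ∑ i, d i (h * u i) = 0) {i : ι}
    (momentum : dt (h * u i) + ∑ j, d j (h * u i * u j + (Pi.single i p : ι → A) j) = 0) :
    h * materialDeriv dt d u (u i) = -d i p := by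
  have pressure : ∑ j, d j ((Pi.single i p : ι → A) j) = d i p := by
    simp only [Pi.single_apply, apply_ite, map_zero, Finset.sum_ite_eq', Finset.mem_univ, if_true]
  rw [← flux_form_eq_mul_materialDeriv mass]
  simp only [map_add, Finset.sum_add_distrib] at momentum
  linear_combination momentum - pressure

end CommRing

variable [Field R] [CharZero R] [Algebra R A] {dt : Derivation R A A} {d : ι → Derivation R A A}
  {h p : A} {u : ι → A}

theorem derivation_half_sum_sq (D : Derivation R A A) (u : ι → A) :
    D ((1 / 2 : R) • ∑ i, u i ^ 2) = ∑ i, u i * D (u i) := by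
  rw [D.map_smul, map_sum, Finset.smul_sum]
  refine Finset.sum_congr rfl fun i _ => ?_
  simp only [Derivation.leibniz_pow, smul_eq_mul, nsmul_eq_mul]
  algebra

theorem energy_conservation_of_internal_energy [DecidableEq ι] {e : A}
    (mass : dt h + ∑ i, d i (h * u i) = 0)
    (momentum : ∀ i, dt (h * u i) + ∑ j, d j (h * u i * u j + (Pi.single i p : ι → A) j) = 0)
    (internal : h * materialDeriv dt d u e = -(p * ∑ i, d i (u i))) :
    dt (h * ((1 / 2 : R) • ∑ j, u j ^ 2 + e)) +
      ∑ i, d i (h * ((1 / 2 : R) • ∑ j, u j ^ 2 + e) * u i + p * u i) = 0 := by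
  set E := (1 / 2 : R) • ∑ j, u j ^ 2 + e with E_def
  have kinetic : h * materialDeriv dt d u ((1 / 2 : R) • ∑ j, u j ^ 2) = -∑ i, u i * d i p := by
    rw [derivation_half_sum_sq, Finset.mul_sum, ← Finset.sum_neg_distrib]
    refine Finset.sum_congr rfl fun i _ => ?_
    linear_combination u i * mul_materialDeriv_velocity mass (momentum i)
  have total : h * materialDeriv dt d u E = -∑ i, d i (p * u i) := by
    rw [E_def, map_add, sum_derivation_mul]
    linear_combination kinetic + internal
  simp only [map_add, Finset.sum_add_distrib]
  linear_combination flux_form_eq_mul_materialDeriv mass E + total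

/-- The pressure `g h² / 2 + h² ḧ / 3` of the Serre–Green–Naghdi system, for the material
derivative `D`. -/
def sgnPressure (g : R) (D : Derivation R A A) (h : A) : A :=
  (g / 2) • h ^ 2 + (1 / 3 : R) • (h ^ 2 * D (D h))

/-- The part `g h / 2 + ḣ² / 6` of the specific energy that does not come from the horizontal
velocity, for the material derivative `D`. -/
def sgnInternalEnergy (g : R) (D : Derivation R A A) (h : A) : A :=
  (g / 2) • h + (1 / 6 : R) • D h ^ 2

/-- The specific energy `|u|² / 2 + g h / 2 + ḣ² / 6`, for the material derivative `D`. -/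
def sgnEnergy (g : R) (D : Derivation R A A) (h : A) (u : ι → A) : A :=
  (1 / 2 : R) • ∑ i, u i ^ 2 + sgnInternalEnergy g D h

theorem mul_materialDeriv_sgnInternalEnergy (g : R) (mass : dt h + ∑ i, d i (h * u i) = 0) :
    h * materialDeriv dt d u (sgnInternalEnergy g (materialDeriv dt d u) h) =
      -(sgnPressure g (materialDeriv dt d u) h * ∑ i, d i (u i)) := by
  unfold sgnInternalEnergy sgnPressure
  set D := materialDeriv dt d u
  calc h * D ((g / 2) • h + (1 / 6 : R) • D h ^ 2)
      = h * D h * ((g / 2) • 1 + (1 / 3 : R) • D (D h)) := by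
        rw [map_add, D.map_smul, D.map_smul, D.leibniz_pow, smul_eq_mul, nsmul_eq_mul]
        algebra
    _ = h * -(h * ∑ i, d i (u i)) * ((g / 2) • 1 + (1 / 3 : R) • D (D h)) := by
        nth_rw 1 [materialDeriv_depth mass]
    _ = -(((g / 2) • h ^ 2 + (1 / 3 : R) • (h ^ 2 * D (D h))) * ∑ i, d i (u i)) := by
        algebra

theorem sgn2d_local_energy_conservation_general [DecidableEq ι] (g : R)
    {D : Derivation R A A} (D_eq : D = materialDeriv dt d u)
    (mass : dt h + ∑ i, d i (h * u i) = 0)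
    (momentum : ∀ i, dt (h * u i) +
      ∑ j, d j (h * u i * u j + (Pi.single i (sgnPressure g D h) : ι → A) j) = 0) :
    dt (h * sgnEnergy g D h u) +
      ∑ i, d i (h * sgnEnergy g D h u * u i + sgnPressure g D h * u i) = 0 := by
  subst D_eq
  exact energy_conservation_of_internal_energy mass momentum
    (mul_materialDeriv_sgnInternalEnergy g mass)

end DifferentialAlgebra

section SmoothFunctions

/-- The algebra of smooth functions of `(t, x, y)`, curried as in `Smooth3`. -/
def smoothFunctions : Subalgebra ℝ (ℝ → ℝ → ℝ → ℝ) where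
  carrier := {f | Smooth3 f}
  mul_mem' {f g} (hf : Smooth3 f) (hg : Smooth3 g) := ContDiff.mul hf hg
  add_mem' {f g} (hf : Smooth3 f) (hg : Smooth3 g) := ContDiff.add hf hg
  algebraMap_mem' c := show Smooth3 fun _ _ _ => c from contDiff_const

variable {f : ℝ → ℝ → ℝ → ℝ}

theorem Smooth3.differentiable (hf : Smooth3 f) :
    Differentiable ℝ fun q : ℝ × ℝ × ℝ => f q.1 q.2.1 q.2.2 :=
  ContDiff.differentiable hf (by simp)

theorem Smooth3.fderiv_apply (hf : Smooth3 f) (v : ℝ × ℝ × ℝ) :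
    Smooth3 fun t x y => fderiv ℝ (fun q : ℝ × ℝ × ℝ => f q.1 q.2.1 q.2.2) (t, x, y) v :=
  (ContDiff.fderiv_right (m := (⊤ : ℕ∞)) hf (by simp)).clm_apply contDiff_const

theorem Smooth3.deriv_comp (hf : Smooth3 f) {c : ℝ → ℝ × ℝ × ℝ} {v : ℝ × ℝ × ℝ} {s : ℝ}
    (hc : HasDerivAt c v s) :
    deriv (fun s => f (c s).1 (c s).2.1 (c s).2.2) s =
      fderiv ℝ (fun q : ℝ × ℝ × ℝ => f q.1 q.2.1 q.2.2) (c s) v :=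
  ((hf.differentiable (c s)).hasFDerivAt.comp_hasDerivAt s hc).deriv

theorem Smooth3.pT_eq_fderiv (hf : Smooth3 f) (t x y : ℝ) :
    pT f t x y = fderiv ℝ (fun q : ℝ × ℝ × ℝ => f q.1 q.2.1 q.2.2) (t, x, y) (1, 0, 0) :=
  hf.deriv_comp ((hasDerivAt_id t).prodMk (hasDerivAt_const t (x, y)))

theorem Smooth3.pX_eq_fderiv (hf : Smooth3 f) (t x y : ℝ) :
    pX f t x y = fderiv ℝ (fun q : ℝ × ℝ × ℝ => f q.1 q.2.1 q.2.2) (t, x, y) (0, 1, 0) :=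
  hf.deriv_comp ((hasDerivAt_const x t).prodMk ((hasDerivAt_id x).prodMk (hasDerivAt_const x y)))

theorem Smooth3.pY_eq_fderiv (hf : Smooth3 f) (t x y : ℝ) :
    pY f t x y = fderiv ℝ (fun q : ℝ × ℝ × ℝ => f q.1 q.2.1 q.2.2) (t, x, y) (0, 0, 1) :=
  hf.deriv_comp ((hasDerivAt_const y t).prodMk ((hasDerivAt_const y x).prodMk (hasDerivAt_id y)))

/-- An operator that differentiates smooth functions in the direction `v`, as a derivation of
`smoothFunctions`. The operator is a parameter, tied to `fderiv` only propositionally, so that the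
derivations built from `pT`, `pX` and `pY` unfold to these. -/
def directionalDerivation (op : (ℝ → ℝ → ℝ → ℝ) → ℝ → ℝ → ℝ → ℝ) (v : ℝ × ℝ × ℝ)
    (op_eq : ∀ {f}, Smooth3 f → ∀ t x y,
      op f t x y = fderiv ℝ (fun q : ℝ × ℝ × ℝ => f q.1 q.2.1 q.2.2) (t, x, y) v) :
    Derivation ℝ smoothFunctions smoothFunctions :=
  have smooth (f : smoothFunctions) : Smooth3 f := f.2
  have smooth_op (f : smoothFunctions) : Smooth3 (op f) :=
    (funext₃ (op_eq (smooth f))).symm ▸ (smooth f).fderiv_apply v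
  Derivation.mk'
    { toFun f := ⟨op f, smooth_op f⟩
      map_add' f g := by
        ext t x y
        change op ↑(f + g) t x y = op f t x y + op g t x y
        rw [op_eq (smooth (f + g)), op_eq (smooth f), op_eq (smooth g)]
        exact congr($(fderiv_fun_add ((smooth f).differentiable (t, x, y))
          ((smooth g).differentiable (t, x, y))) v)
      map_smul' c f := by
        ext t x y
        change op ↑(c • f) t x y = c * op f t x y
        rw [op_eq (smooth (c • f)), op_eq (smooth f)]
        exact congr($(fderiv_fun_const_smul ((smooth f).differentiable (t, x, y)) c) v) }
    fun f g => by
      ext t x y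
      change op ↑(f * g) t x y = f.1 t x y * op g t x y + g.1 t x y * op f t x y
      rw [op_eq (smooth (f * g)), op_eq (smooth f), op_eq (smooth g)]
      exact congr($(fderiv_fun_mul ((smooth f).differentiable (t, x, y))
        ((smooth g).differentiable (t, x, y))) v)

/-- The time derivative `pT` as a derivation of `smoothFunctions`. -/
def timeDerivation : Derivation ℝ smoothFunctions smoothFunctions :=
  directionalDerivation pT (1, 0, 0) Smooth3.pT_eq_fderiv

/-- The gradient `(pX, pY)` as a pair of derivations of `smoothFunctions`. -/
def spaceDerivation : Fin 2 → Derivation ℝ smoothFunctions smoothFunctions :=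
  ![directionalDerivation pX (0, 1, 0) Smooth3.pX_eq_fderiv,
    directionalDerivation pY (0, 0, 1) Smooth3.pY_eq_fderiv]

theorem coe_materialDeriv (u1 u2 f : smoothFunctions) :
    (materialDeriv timeDerivation spaceDerivation ![u1, u2] f).1 = fun t x y =>
      pT f t x y + u1.1 t x y * pX f t x y + u2.1 t x y * pY f t x y := by
  rw [materialDeriv_apply, Fin.sum_univ_two, ← add_assoc]
  rfl

theorem coe_sgnPressure (g : ℝ) (D : Derivation ℝ smoothFunctions smoothFunctions)
    (h : smoothFunctions) :
    (sgnPressure g D h).1 = fun t x y =>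
      g * h.1 t x y ^ 2 / 2 + h.1 t x y ^ 2 / 3 * (D (D h)).1 t x y := by
  funext t x y
  change g / 2 * h.1 t x y ^ 2 + 1 / 3 * (h.1 t x y ^ 2 * (D (D h)).1 t x y) = _
  ring

theorem coe_sgnEnergy (g : ℝ) (D : Derivation ℝ smoothFunctions smoothFunctions)
    (h u1 u2 : smoothFunctions) :
    (sgnEnergy g D h ![u1, u2]).1 = fun t x y =>
      (u1.1 t x y ^ 2 + u2.1 t x y ^ 2) / 2 + g * h.1 t x y / 2 + (D h).1 t x y ^ 2 / 6 := by
  funext t x y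
  rw [sgnEnergy, Fin.sum_univ_two]
  change 1 / 2 * (u1.1 t x y ^ 2 + u2.1 t x y ^ 2) +
    (g / 2 * h.1 t x y + 1 / 6 * (D h).1 t x y ^ 2) = _
  ring

theorem conservation_law_iff {f : smoothFunctions} {F : Fin 2 → smoothFunctions} :
    timeDerivation f + ∑ i, spaceDerivation i (F i) = 0 ↔
      ∀ t x y, pT f t x y + pX (F 0) t x y + pY (F 1) t x y = 0 := by
  rw [Fin.sum_univ_two, ← add_assoc]
  simp only [Subtype.ext_iff, funext_iff]
  rfl

end SmoothFunctions

/-- If smooth `h > 0` and `ū = (u1, u2)` satisfy the 2D Serre–Green–Naghdi system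
(mass and momentum equations), then the local energy conservation law
`∂ₜ(hE) + ∇·(hEū + pū) = 0` holds, with `E = |ū|²/2 + gh/2 + ḣ²/6`. -/
theorem sgn2d_local_energy_conservation
    (g : ℝ) (hg : 0 < g)
    (h u1 u2 : ℝ → ℝ → ℝ → ℝ)
    (h_smooth : Smooth3 h) (u1_smooth : Smooth3 u1) (u2_smooth : Smooth3 u2)
    (h_pos : ∀ t x y, 0 < h t x y)
    (hdot : ℝ → ℝ → ℝ → ℝ)
    (hdot_def : hdot = fun t x y =>
      pT h t x y + u1 t x y * pX h t x y + u2 t x y * pY h t x y)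
    (hddot : ℝ → ℝ → ℝ → ℝ)
    (hddot_def : hddot = fun t x y =>
      pT hdot t x y + u1 t x y * pX hdot t x y + u2 t x y * pY hdot t x y)
    (p : ℝ → ℝ → ℝ → ℝ)
    (p_def : p = fun t x y => g * (h t x y) ^ 2 / 2 + (h t x y) ^ 2 / 3 * hddot t x y)
    (mass : ∀ t x y,
      pT h t x y + pX (fun t x y => h t x y * u1 t x y) t x y
        + pY (fun t x y => h t x y * u2 t x y) t x y = 0)
    (mom1 : ∀ t x y,
      pT (fun t x y => h t x y * u1 t x y) t x y
        + pX (fun t x y => h t x y * u1 t x y * u1 t x y + p t x y) t x y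
        + pY (fun t x y => h t x y * u1 t x y * u2 t x y) t x y = 0)
    (mom2 : ∀ t x y,
      pT (fun t x y => h t x y * u2 t x y) t x y
        + pX (fun t x y => h t x y * u2 t x y * u1 t x y) t x y
        + pY (fun t x y => h t x y * u2 t x y * u2 t x y + p t x y) t x y = 0)
    (E : ℝ → ℝ → ℝ → ℝ)
    (E_def : E = fun t x y =>
      ((u1 t x y) ^ 2 + (u2 t x y) ^ 2) / 2 + g * h t x y / 2 + (hdot t x y) ^ 2 / 6) :
    ∀ t x y,
      pT (fun t x y => h t x y * E t x y) t x y
        + pX (fun t x y => h t x y * E t x y * u1 t x y + p t x y * u1 t x y) t x y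
        + pY (fun t x y => h t x y * E t x y * u2 t x y + p t x y * u2 t x y) t x y = 0 := by
  lift h to smoothFunctions using h_smooth
  lift u1 to smoothFunctions using u1_smooth
  lift u2 to smoothFunctions using u2_smooth
  let D := materialDeriv timeDerivation spaceDerivation ![u1, u2]
  obtain rfl : hdot = D h := hdot_def.trans (coe_materialDeriv u1 u2 h).symm
  obtain rfl : hddot = D (D h) := hddot_def.trans (coe_materialDeriv u1 u2 (D h)).symm
  obtain rfl : p = sgnPressure g D h := p_def.trans (coe_sgnPressure g D h).symm
  obtain rfl : E = sgnEnergy g D h ![u1, u2] := E_def.trans (coe_sgnEnergy g D h u1 u2).symm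
  refine conservation_law_iff.1 (sgn2d_local_energy_conservation_general g (D := D) rfl
    (conservation_law_iff.2 mass) (Fin.forall_fin_two.2
      ⟨conservation_law_iff.2 ?momentum1, conservation_law_iff.2 ?momentum2⟩))
  case momentum1 =>
    rw [Pi.single_eq_same, Pi.single_eq_of_ne one_ne_zero, add_zero]
    exact mom1
  case momentum2 =>
    rw [Pi.single_eq_same, Pi.single_eq_of_ne zero_ne_one, add_zero]
    exact mom2
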